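/- Let p_1, p_2, p_3 be three distinct non-collinear points of P^2 and let Z' = 2p_1 + 2p_2 + p_3 be the fat points scheme with double points at p_1 and p_2 and a simple point at p_3. Then the Waldschmidt constant of I(Z') equals 5/2. -/

import Mathlib

noncomputable section

open MvPolynomial

/-- `alpha J` is the least degree of a nonzero homogeneous form in the ideal `J`. -/
def alpha {kk : Type*} [Field kk] {σ : Type*} (J : Ideal (MvPolynomial σ kk)) : ℕ :=
  sInf {d : ℕ | ∃ f ∈ J, f ≠ 0 ∧ MvPolynomial.IsHomogeneous f d}

/-- The homogeneous (prime) ideal of the point of `ℙ²` represented by the nonzero vector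
`p`, generated by the linear forms vanishing at `p`. -/
def pointIdeal {kk : Type*} [Field kk] (p : Fin 3 → kk) : Ideal (MvPolynomial (Fin 3) kk) :=
  Ideal.span {f | f.IsHomogeneous 1 ∧ MvPolynomial.eval p f = 0}

/-- Two nonzero vectors represent the same point of `ℙ²`. -/
def projEq {kk : Type*} [Field kk] (p q : Fin 3 → kk) : Prop :=
  ∃ c : kk, c ≠ 0 ∧ q = c • p

theorem homog_deg {kk : Type*} [Field kk] {g : MvPolynomial (Fin 3) kk} {d : ℕ}
    (hg : g.IsHomogeneous d) {s : Fin 3 →₀ ℕ} (hs : s ∈ g.support) : s.degree = d := by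
  rw [← hg (MvPolynomial.mem_support_iff.1 hs), Finsupp.degree_eq_weight_one]
  rfl

/-- polynomials all of whose monomials have degree at least `m` off the variable `j` -/
def offIdeal (kk : Type*) [Field kk] (j : Fin 3) (m : ℕ) : Ideal (MvPolynomial (Fin 3) kk) where
  carrier := {f | ∀ s ∈ f.support, m + s j ≤ s.degree}
  zero_mem' := by simp
  add_mem' := by
    intro a b ha hb s hs
    rcases Finset.mem_union.1 (MvPolynomial.support_add hs) with h | h
    · exact ha s h
    · exact hb s h
  smul_mem' := by
    intro c f hf s hs
    rw [smul_eq_mul] at hs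
    obtain ⟨u, hu, v, hv, rfl⟩ := Finset.mem_add.1 (MvPolynomial.support_mul _ _ hs)
    have h1 := hf v hv
    have h2 := Finsupp.le_degree j u
    simp only [Finsupp.add_apply, map_add]
    omega

theorem offIdeal_mul {kk : Type*} [Field kk] (j : Fin 3) (a b : ℕ) :
    offIdeal kk j a * offIdeal kk j b ≤ offIdeal kk j (a + b) := by
  rw [Ideal.mul_le]
  intro f hf g hg s hs
  obtain ⟨u, hu, v, hv, rfl⟩ := Finset.mem_add.1 (MvPolynomial.support_mul _ _ hs)
  have h1 := hf u hu
  have h2 := hg v hv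
  simp only [Finsupp.add_apply, map_add]
  omega

theorem offIdeal_pow {kk : Type*} [Field kk] (j : Fin 3) (m : ℕ) :
    offIdeal kk j 1 ^ m ≤ offIdeal kk j m := by
  induction m with
  | zero =>
    intro f _ s _
    have h2 := Finsupp.le_degree j s
    omega
  | succ n ih =>
    rw [pow_succ]
    exact (Ideal.mul_mono_left ih).trans (offIdeal_mul j n 1)

theorem lin_mem_offIdeal {kk : Type*} [Field kk] (j : Fin 3) (g : MvPolynomial (Fin 3) kk)
    (hg : g.IsHomogeneous 1) (h0 : MvPolynomial.eval (Pi.single j 1) g = 0) :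
    g ∈ offIdeal kk j 1 := by
  intro s hs
  have hdeg : ∀ t ∈ g.support, t.degree = 1 := fun t ht =>
    homog_deg hg ht
  have hd := hdeg s hs
  have hle := Finsupp.le_degree j s
  by_contra hcon
  have hsj : s j = 1 := by omega
  have key : ∀ t ∈ g.support, t j = 1 → t = Finsupp.single j 1 := by
    intro t ht htj
    have h3 := hdeg t ht
    rw [Finsupp.degree_eq_sum, ← Finset.add_sum_erase _ _ (Finset.mem_univ j)] at h3
    ext i
    by_cases hij : i = j
    · subst hij; simp [htj]
    · have : t i ≤ ∑ x ∈ Finset.univ.erase j, t x :=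
        Finset.single_le_sum (f := fun x => t x) (fun _ _ => Nat.zero_le _) (by simp [hij])
      rw [Finsupp.single_apply, if_neg (Ne.symm hij)]
      omega
  rw [MvPolynomial.eval_eq', Finset.sum_eq_single s] at h0
  · rw [MvPolynomial.mem_support_iff] at hs
    apply hs
    rw [Finset.prod_eq_one, mul_one] at h0
    · exact h0
    · intro i _
      rw [key s (by rwa [MvPolynomial.mem_support_iff]) hsj]
      by_cases hij : i = j
      · subst hij; simp
      · simp [Finsupp.single_apply, Ne.symm hij]
  · intro t ht hts
    have htj : t j ≠ 1 := fun h => hts ((key t ht h).trans (key s hs hsj).symm)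
    have h3 := hdeg t ht
    have : ∃ i, i ≠ j ∧ t i ≠ 0 := by
      by_contra hno
      push Not at hno
      apply htj
      rw [Finsupp.degree_eq_sum, Finset.sum_eq_single j (fun b _ hb => hno b hb) (by simp)] at h3
      exact h3
    obtain ⟨i, hij, hi⟩ := this
    rw [Finset.prod_eq_zero (Finset.mem_univ i), mul_zero]
    rw [Pi.single_eq_of_ne hij, zero_pow hi]
  · intro h; exact absurd hs h

/-- linear change of coordinates -/
def chg {kk : Type*} [Field kk] (P : Matrix (Fin 3) (Fin 3) kk) :
    MvPolynomial (Fin 3) kk →ₐ[kk] MvPolynomial (Fin 3) kk :=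
  MvPolynomial.aeval (fun i => ∑ j, MvPolynomial.C (P j i) * MvPolynomial.X j)

theorem eval_chg {kk : Type*} [Field kk] (P : Matrix (Fin 3) (Fin 3) kk) (v : Fin 3 → kk)
    (f : MvPolynomial (Fin 3) kk) :
    MvPolynomial.eval v (chg P f) = MvPolynomial.eval (Matrix.vecMul v P) f := by
  induction f using MvPolynomial.induction_on with
  | C a => simp [chg]
  | add p q hp hq => simp [hp, hq]
  | mul_X p i hp =>
    rw [map_mul, map_mul, map_mul, hp]
    congr 1
    simp [chg, Matrix.vecMul, dotProduct, mul_comm]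

theorem chg_homog {kk : Type*} [Field kk] (P : Matrix (Fin 3) (Fin 3) kk) (d : ℕ)
    (f : MvPolynomial (Fin 3) kk) (hf : f.IsHomogeneous d) : (chg P f).IsHomogeneous d := by
  have := hf.aeval (n := 1) (fun i => ∑ j, MvPolynomial.C (P j i) * MvPolynomial.X j) (by
    intro i
    apply MvPolynomial.IsHomogeneous.sum
    intro j _
    exact MvPolynomial.isHomogeneous_C_mul_X _ _)
  simpa [chg] using this

theorem chg_ne_zero {kk : Type*} [Field kk] [Infinite kk] (P : Matrix (Fin 3) (Fin 3) kk)
    (hP : IsUnit P.det) (f : MvPolynomial (Fin 3) kk) (hf : f ≠ 0) : chg P f ≠ 0 := by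
  intro h
  apply hf
  apply MvPolynomial.funext
  intro v
  have := eval_chg P (Matrix.vecMul v P⁻¹) f
  rw [h, Matrix.vecMul_vecMul, Matrix.nonsing_inv_mul _ hP, Matrix.vecMul_one] at this
  rw [← this]; simp

theorem chg_mem {kk : Type*} [Field kk] (P : Matrix (Fin 3) (Fin 3) kk) (j : Fin 3) (m : ℕ)
    (f : MvPolynomial (Fin 3) kk) (hf : f ∈ pointIdeal (P j) ^ m) :
    chg P f ∈ offIdeal kk j m := by
  have h1 : (pointIdeal (P j)).map (chg P) ≤ offIdeal kk j 1 := by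
    rw [Ideal.map_le_iff_le_comap, pointIdeal, Ideal.span_le]
    rintro g ⟨hg, hg0⟩
    apply lin_mem_offIdeal j _ (chg_homog P 1 g hg)
    rw [eval_chg, Matrix.single_one_vecMul]
    exact hg0
  apply offIdeal_pow j m
  apply Ideal.pow_right_mono h1 m
  rw [← Ideal.map_pow]
  exact Ideal.mem_map_of_mem _ hf

theorem lower_bd {kk : Type*} [Field kk] [Infinite kk] (P : Matrix (Fin 3) (Fin 3) kk)
    (hP : IsUnit P.det) (k d : ℕ) (f : MvPolynomial (Fin 3) kk) (hf : f ≠ 0)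
    (hd : f.IsHomogeneous d) (h0 : f ∈ pointIdeal (P 0) ^ (2 * k))
    (h1 : f ∈ pointIdeal (P 1) ^ (2 * k)) (h2 : f ∈ pointIdeal (P 2) ^ k) :
    5 * k ≤ 2 * d := by
  have hne := chg_ne_zero P hP f hf
  obtain ⟨s, hs⟩ := Finset.nonempty_of_ne_empty (mt MvPolynomial.support_eq_empty.1 hne)
  have a0 := chg_mem P 0 _ f h0 s hs
  have a1 := chg_mem P 1 _ f h1 s hs
  have a2 := chg_mem P 2 _ f h2 s hs
  have e := homog_deg (chg_homog P d f hd) hs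
  rw [Finsupp.degree_eq_sum, Fin.sum_univ_three] at e a0 a1 a2
  omega

/-- linear form with given coefficients -/
def lf {kk : Type*} [Field kk] (v : Fin 3 → kk) : MvPolynomial (Fin 3) kk :=
  ∑ i, MvPolynomial.C (v i) * MvPolynomial.X i

theorem lf_homog {kk : Type*} [Field kk] (v : Fin 3 → kk) : (lf v).IsHomogeneous 1 := by
  apply MvPolynomial.IsHomogeneous.sum
  intro j _
  exact MvPolynomial.isHomogeneous_C_mul_X _ _

theorem eval_lf {kk : Type*} [Field kk] (v p : Fin 3 → kk) :
    MvPolynomial.eval p (lf v) = p ⬝ᵥ v := by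
  simp [lf, dotProduct, mul_comm]

theorem exists_forms {kk : Type*} [Field kk] (P : Matrix (Fin 3) (Fin 3) kk)
    (hP : IsUnit P.det) : ∃ l : Fin 3 → MvPolynomial (Fin 3) kk, (∀ i, l i ≠ 0) ∧
      (∀ i, (l i).IsHomogeneous 1) ∧ ∀ i j, i ≠ j → l i ∈ pointIdeal (P j) := by
  have key : ∀ i j, MvPolynomial.eval (P j) (lf (fun a => P⁻¹ a i)) =
      (1 : Matrix (Fin 3) (Fin 3) kk) j i := by
    intro i j
    rw [eval_lf, ← Matrix.mul_nonsing_inv P hP, Matrix.mul_apply]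
    rfl
  refine ⟨fun i => lf (fun a => P⁻¹ a i), ?_, fun i => lf_homog _, ?_⟩
  · intro i h
    have := key i i
    simp only at h
    rw [h] at this
    simp at this
  · intro i j hij
    apply Ideal.subset_span
    refine ⟨lf_homog _, ?_⟩
    rw [key, Matrix.one_apply_ne hij.symm]

/-- Let `p₁, p₂, p₃` be three distinct non-collinear points of `ℙ²` and
let `Z' = 2p₁ + 2p₂ + p₃`.  Then the Waldschmidt constant of `I(Z')` equals `5/2`. -/
theorem waldschmidt_two_double_points_eq
    {kk : Type*} [Field kk] [IsAlgClosed kk]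
    (p₁ p₂ p₃ : Fin 3 → kk)
    (hp10 : p₁ ≠ 0) (hp20 : p₂ ≠ 0) (hp30 : p₃ ≠ 0)
    (hp12 : ¬ projEq p₁ p₂) (hp13 : ¬ projEq p₁ p₃) (hp23 : ¬ projEq p₂ p₃)
    (hncol : ¬ ∃ g : MvPolynomial (Fin 3) kk, g ≠ 0 ∧ g.IsHomogeneous 1 ∧
      MvPolynomial.eval p₁ g = 0 ∧ MvPolynomial.eval p₂ g = 0 ∧
      MvPolynomial.eval p₃ g = 0) :
    (⨅ k : ℕ+, (alpha (pointIdeal p₁ ^ (2 * (k : ℕ)) ⊓ pointIdeal p₂ ^ (2 * (k : ℕ)) ⊓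
        pointIdeal p₃ ^ (k : ℕ)) : ℝ) / ((k : ℕ) : ℝ)) = 5 / 2 := by
  have hinf : Infinite kk := IsAlgClosed.instInfinite
  set P : Matrix (Fin 3) (Fin 3) kk := Matrix.of ![p₁, p₂, p₃] with hPdef
  have hP : IsUnit P.det := by
    rw [isUnit_iff_ne_zero]
    intro hdet
    obtain ⟨v, hv, hPv⟩ := Matrix.exists_mulVec_eq_zero_iff.2 hdet
    apply hncol
    have hz : ∀ j, MvPolynomial.eval (P j) (lf v) = 0 := by
      intro j
      rw [eval_lf]
      exact congrFun hPv j
    refine ⟨lf v, ?_, lf_homog v, hz 0, hz 1, hz 2⟩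
    intro h
    apply hv
    funext i
    have := eval_lf v (Pi.single i 1)
    rw [h] at this
    simpa using this.symm
  obtain ⟨l, hl0, hl1, hlm⟩ := exists_forms P hP
  have m01 : l 0 ∈ pointIdeal p₂ := hlm 0 1 (by decide)
  have m02 : l 0 ∈ pointIdeal p₃ := hlm 0 2 (by decide)
  have m10 : l 1 ∈ pointIdeal p₁ := hlm 1 0 (by decide)
  have m12 : l 1 ∈ pointIdeal p₃ := hlm 1 2 (by decide)
  have m20 : l 2 ∈ pointIdeal p₁ := hlm 2 0 (by decide)
  have m21 : l 2 ∈ pointIdeal p₂ := hlm 2 1 (by decide)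
  have lb : ∀ k : ℕ+, (5 / 2 : ℝ) ≤ (alpha (pointIdeal p₁ ^ (2 * (k : ℕ)) ⊓
      pointIdeal p₂ ^ (2 * (k : ℕ)) ⊓ pointIdeal p₃ ^ (k : ℕ)) : ℝ) / ((k : ℕ) : ℝ) := by
    intro k
    have hne : {d : ℕ | ∃ f ∈ (pointIdeal p₁ ^ (2 * (k : ℕ)) ⊓
      pointIdeal p₂ ^ (2 * (k : ℕ)) ⊓ pointIdeal p₃ ^ (k : ℕ)), f ≠ 0 ∧
        MvPolynomial.IsHomogeneous f d}.Nonempty := by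
      refine ⟨_, (l 0) ^ (2 * (k : ℕ)) * (l 1) ^ (2 * (k : ℕ)), ⟨⟨?_, ?_⟩, ?_⟩, ?_,
        ((hl1 0).pow _).mul ((hl1 1).pow _)⟩
      · exact Ideal.mul_mem_left _ _ (Ideal.pow_mem_pow m10 _)
      · exact Ideal.mul_mem_right _ _ (Ideal.pow_mem_pow m01 _)
      · exact Ideal.mul_mem_right _ _ (Ideal.pow_le_pow_right (by omega)
          (Ideal.pow_mem_pow m02 (2 * (k : ℕ))))
      · exact mul_ne_zero (pow_ne_zero _ (hl0 0)) (pow_ne_zero _ (hl0 1))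
    obtain ⟨f, ⟨⟨h0, h1⟩, h2⟩, hf, hd⟩ := Nat.sInf_mem hne
    have := lower_bd P hP k _ f hf hd h0 h1 h2
    have hk : (0 : ℝ) < ((k : ℕ) : ℝ) := by exact_mod_cast k.pos
    rw [le_div_iff₀ hk]
    have h' : (5 * ((k : ℕ) : ℝ)) ≤ 2 * (alpha (pointIdeal p₁ ^ (2 * (k : ℕ)) ⊓
      pointIdeal p₂ ^ (2 * (k : ℕ)) ⊓ pointIdeal p₃ ^ (k : ℕ)) : ℝ) := by
      unfold alpha
      exact_mod_cast this
    linarith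
  apply le_antisymm
  · refine (ciInf_le ⟨5 / 2, ?_⟩ (2 : ℕ+)).trans ?_
    · rintro _ ⟨k, rfl⟩
      exact lb k
    · have h5 : alpha (pointIdeal p₁ ^ (2 * ((2 : ℕ+) : ℕ)) ⊓
          pointIdeal p₂ ^ (2 * ((2 : ℕ+) : ℕ)) ⊓ pointIdeal p₃ ^ ((2 : ℕ+) : ℕ)) ≤ 5 := by
        apply Nat.sInf_le
        refine ⟨l 0 * l 1 * l 2 ^ 3, ⟨⟨?_, ?_⟩, ?_⟩, ?_,
          ((hl1 0).mul (hl1 1)).mul ((hl1 2).pow 3)⟩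
        · have : l 1 * l 2 ^ 3 ∈ pointIdeal p₁ ^ (1 + 3) := by
            rw [pow_add, pow_one]
            exact Ideal.mul_mem_mul m10 (Ideal.pow_mem_pow m20 3)
          rw [mul_assoc]
          exact Ideal.mul_mem_left _ _ this
        · have : l 0 * l 2 ^ 3 ∈ pointIdeal p₂ ^ (1 + 3) := by
            rw [pow_add, pow_one]
            exact Ideal.mul_mem_mul m01 (Ideal.pow_mem_pow m21 3)
          rw [mul_comm (l 0), mul_assoc]
          exact Ideal.mul_mem_left _ _ this
        · have : l 0 * l 1 ∈ pointIdeal p₃ ^ 2 := by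
            rw [pow_two]
            exact Ideal.mul_mem_mul m02 m12
          exact Ideal.mul_mem_right _ _ this
        · exact mul_ne_zero (mul_ne_zero (hl0 0) (hl0 1)) (pow_ne_zero _ (hl0 2))
      have h5' : (alpha (pointIdeal p₁ ^ (2 * ((2 : ℕ+) : ℕ)) ⊓
          pointIdeal p₂ ^ (2 * ((2 : ℕ+) : ℕ)) ⊓ pointIdeal p₃ ^ ((2 : ℕ+) : ℕ)) : ℝ) ≤ 5 := by
        exact_mod_cast h5
      have h22 : (((2 : ℕ+) : ℕ) : ℝ) = 2 := by norm_num
      rw [div_le_div_iff₀ (by rw [h22]; norm_num) (by norm_num), h22]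
      linarith
  · exact le_ciInf lb
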